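/- arXiv:0905.2497 — 2 statements merged into one kernel-verified Lean document; each statement's English description precedes it below -/
import Mathlib

section
/- Suppose Y ⊂ ℝ^p and K are compact and K_y is nonempty for every y ∈ Y. Let μ* be any measure attaining ρ, i.e. a finite Borel measure on K with marginal φ on ℝ^p and ∫_K f dμ* = ρ. Then there exists a stochastic kernel ψ*(dx | y) (a Borel measurable family of probability measures on ℝ^n indexed by y ∈ Y) such that ψ*(X*_y | y) = 1 for φ-almost all y ∈ Y and μ*(C × B) = ∫_{B∩Y} ψ*(C ∩ X*_y | y) dφ(y) for all Borel sets C ⊂ ℝ^n and B ⊂ ℝ^p. -/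
open MeasureTheory Set TopologicalSpace Filter Topology

/-!
Let `s y` be a minimizer of `f (·, y)` over the slice of `K` at `y`, chosen measurably in `y`. Its
graph carries a lift of `φ` whose cost `∫ f (s y, y) dφ` an optimal `μ*` cannot exceed, while
`f (s y, y) ≤ f (x, y)` on `K`; hence equality holds `μ*`-almost everywhere, that is, `μ*` is
carried by the pairs `(x, y)` with `x` a minimizer over the slice at `y`. Disintegrating `μ*` along
`y` gives the kernel.

For the measurable choice, `K` is a continuous image of the Cantor space, which embeds in `ℝ`; one
takes the least minimizer there.
-/

theorem exists_measurable_selection {E Z : Type*} [TopologicalSpace E] [CompactSpace E]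
    [MeasurableSpace E] [BorelSpace E] [Nonempty E] [MeasurableSpace Z]
    {ι : E → ℝ} (hι : Continuous ι) (hι_inj : Function.Injective ι)
    {A : Z → Set E} (hA : ∀ y, IsCompact (A y))
    (hA_meas : ∀ S, IsCompact S → MeasurableSet {y | (S ∩ A y).Nonempty}) :
    ∃ s : Z → E, Measurable s ∧ ∀ y, (A y).Nonempty → s y ∈ A y := by
  let D : Set Z := {y | (A y).Nonempty}
  have hD : MeasurableSet D := by simpa only [univ_inter] using hA_meas univ isCompact_univ
  choose a ha_mem ha_min using fun y : D => (hA y).exists_isMinOn y.2 hι.continuousOn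
  have hι_emb : MeasurableEmbedding ι := (hι.isClosedEmbedding hι_inj).measurableEmbedding
  have ha : Measurable a := by
    refine hι_emb.measurable_comp_iff.1 (measurable_of_Iic fun c => ?_)
    have hc : IsCompact (ι ⁻¹' Iic c) := (isClosed_Iic.preimage hι).isCompact
    convert measurable_subtype_coe (hA_meas _ hc) using 1
    ext y
    exact ⟨fun hy => ⟨a y, hy, ha_mem y⟩,
      fun ⟨_, he, heA⟩ => le_trans (isMinOn_iff.1 (ha_min y) _ heA) he⟩
  obtain ⟨s, hs, hsa⟩ :=
    (MeasurableEmbedding.subtype_coe hD).exists_measurable_extend ha fun _ => inferInstance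
  refine ⟨s, hs, fun y hy => ?_⟩
  rw [show s y = a ⟨y, hy⟩ from congrFun hsa ⟨y, hy⟩]
  exact ha_mem ⟨y, hy⟩

section FiberwiseMinimization

variable {E Z γ : Type*} [CompleteLinearOrder γ]

/-- The value function of the minimization of `F` over the part of the fibres of `P` lying in `S`.
It is `⊤` where that part is empty. -/
def fiberInf (P : E → Z) (F : E → γ) (S : Set E) (y : Z) : γ :=
  sInf (F '' (S ∩ P ⁻¹' {y}))

/-- The set of minimizers of `F` over the fibre of `P` at `y`. -/
def fiberArgmin (P : E → Z) (F : E → γ) (y : Z) : Set E :=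
  P ⁻¹' {y} ∩ F ⁻¹' Iic (fiberInf P F univ y)

variable {P : E → Z} {F : E → γ} {S : Set E} {y : Z}

theorem le_of_mem_fiberArgmin {a e : E} (ha : a ∈ fiberArgmin P F (P e)) : F a ≤ F e :=
  ha.2.trans (sInf_le ⟨e, ⟨mem_univ e, rfl⟩, rfl⟩)

variable [TopologicalSpace E] [TopologicalSpace Z]

theorem fiberInf_le_iff [T1Space Z] (hP : Continuous P) (hF : LowerSemicontinuous F)
    (hS : IsCompact S) (hy : y ∈ P '' S) {c : γ} :
    fiberInf P F S y ≤ c ↔ ∃ e ∈ S, P e = y ∧ F e ≤ c := by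
  constructor
  · intro hc
    have h_compact : IsCompact (S ∩ P ⁻¹' {y}) :=
      hS.inter_right (isClosed_singleton.preimage hP)
    obtain ⟨a, ⟨haS, haP⟩, ha_min⟩ :=
      (hF.lowerSemicontinuousOn _).exists_isMinOn hy h_compact
    exact ⟨a, haS, haP, (le_sInf (forall_mem_image.2 fun e => isMinOn_iff.1 ha_min e)).trans hc⟩
  · rintro ⟨e, heS, heP, hec⟩
    have h_le : fiberInf P F S y ≤ F e := sInf_le ⟨e, ⟨heS, heP⟩, rfl⟩
    exact h_le.trans hec

theorem isCompact_fiberArgmin [CompactSpace E] [T1Space Z] (hP : Continuous P)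
    (hF : LowerSemicontinuous F) : IsCompact (fiberArgmin P F y) :=
  (hF.lowerSemicontinuousOn _).isCompact_inter_preimage_Iic
    (isClosed_singleton.preimage hP).isCompact _

theorem nonempty_fiberArgmin [CompactSpace E] [T1Space Z] (hP : Continuous P)
    (hF : LowerSemicontinuous F) (hy : y ∈ range P) : (fiberArgmin P F y).Nonempty := by
  obtain ⟨e, -, heP, heF⟩ := (fiberInf_le_iff hP hF isCompact_univ (image_univ ▸ hy)).1 le_rfl
  exact ⟨e, heP, heF⟩

variable [MeasurableSpace Z] [T2Space Z] [OpensMeasurableSpace Z] [TopologicalSpace γ]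
  [OrderTopology γ] [SecondCountableTopology γ]

theorem measurable_fiberInf [MeasurableSpace γ] [BorelSpace γ] (hP : Continuous P)
    (hF : LowerSemicontinuous F) (hS : IsCompact S) : Measurable (fiberInf P F S) := by
  refine measurable_of_Iic fun c => ?_
  obtain rfl | hc := eq_or_ne c ⊤
  · simp only [Iic_top, preimage_univ, MeasurableSet.univ]
  have h_sublevel : fiberInf P F S ⁻¹' Iic c = P '' (S ∩ F ⁻¹' Iic c) := by
    ext y
    by_cases hy : y ∈ P '' S
    · simp only [mem_preimage, mem_Iic, fiberInf_le_iff hP hF hS hy, mem_image, mem_inter_iff]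
      grind
    · have h_top : fiberInf P F S y = ⊤ := by
        have h_empty : S ∩ P ⁻¹' {y} = ∅ := not_nonempty_iff_eq_empty.1 hy
        rw [fiberInf, h_empty, image_empty, sInf_empty]
      simp only [mem_preimage, mem_Iic, h_top, top_le_iff, hc, false_iff]
      exact fun h => hy (image_mono inter_subset_left h)
  rw [h_sublevel]
  exact (((hF.lowerSemicontinuousOn S).isCompact_inter_preimage_Iic hS c).image hP).measurableSet

theorem measurableSet_inter_fiberArgmin_nonempty [CompactSpace E] (hP : Continuous P)
    (hF : LowerSemicontinuous F) (hS : IsCompact S) :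
    MeasurableSet {y | (S ∩ fiberArgmin P F y).Nonempty} := by
  borelize γ
  have h_eq : {y | (S ∩ fiberArgmin P F y).Nonempty} =
      P '' S ∩ {y | fiberInf P F S y ≤ fiberInf P F univ y} := by
    ext y
    constructor
    · rintro ⟨e, heS, heP, heF⟩
      have hy : y ∈ P '' S := ⟨e, heS, heP⟩
      exact ⟨hy, (fiberInf_le_iff hP hF hS hy).2 ⟨e, heS, heP, heF⟩⟩
    · rintro ⟨hy, h_le⟩
      obtain ⟨e, heS, heP, heF⟩ := (fiberInf_le_iff hP hF hS hy).1 h_le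
      exact ⟨e, heS, heP, heF⟩
  rw [h_eq]
  exact (hS.image hP).measurableSet.inter
    (measurableSet_le (measurable_fiberInf hP hF hS) (measurable_fiberInf hP hF isCompact_univ))

end FiberwiseMinimization

section SliceMinimizer

variable {X Z γ : Type*} [TopologicalSpace X] [MetrizableSpace X] [MeasurableSpace X]
  [BorelSpace X] [TopologicalSpace Z] [MetrizableSpace Z] [MeasurableSpace Z]
  [OpensMeasurableSpace Z] [CompleteLinearOrder γ] [TopologicalSpace γ] [OrderTopology γ]
  [SecondCountableTopology γ]

theorem exists_measurable_slice_minimizer [Nonempty X] {K : Set (X × Z)} (hK : IsCompact K)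
    {f : X × Z → γ} (hf : LowerSemicontinuousOn f K) :
    ∃ s : Z → X, Measurable s ∧ ∀ w ∈ K, (s w.2, w.2) ∈ K ∧ f (s w.2, w.2) ≤ f w := by
  obtain rfl | hK_ne := K.eq_empty_or_nonempty
  · exact ⟨fun _ => Classical.arbitrary X, measurable_const, fun _ hw => hw.elim⟩
  let := metrizableSpaceMetric (X × Z)
  have := isCompact_iff_compactSpace.1 hK
  have := hK_ne.to_subtype
  obtain ⟨g, hg, hg_surj⟩ := exists_nat_bool_continuous_surjective_of_compact K
  let P : (ℕ → Bool) → Z := fun e => (g e).1.2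
  let F : (ℕ → Bool) → γ := K.domRestrict f ∘ g
  have hP : Continuous P := by fun_prop
  have hF : LowerSemicontinuous F := (lowerSemicontinuous_restrict_iff.2 hf).comp hg
  obtain ⟨t, ht, ht_mem⟩ := exists_measurable_selection
    (continuous_subtype_val.comp cantorSetHomeomorphNatToBool.symm.continuous)
    (Subtype.val_injective.comp cantorSetHomeomorphNatToBool.symm.injective)
    (fun _ => isCompact_fiberArgmin hP hF)
    (fun _ => measurableSet_inter_fiberArgmin_nonempty hP hF)
  have hg_fst : Continuous fun e => (g e).1.1 := by fun_prop
  refine ⟨fun y => (g (t y)).1.1, hg_fst.measurable.comp ht, fun w hw => ?_⟩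
  obtain ⟨e, he⟩ := hg_surj ⟨w, hw⟩
  have he_val : (g e).1 = w := congrArg Subtype.val he
  have hP_e : P e = w.2 := congrArg Prod.snd he_val
  have h_argmin : t w.2 ∈ fiberArgmin P F w.2 :=
    ht_mem _ (nonempty_fiberArgmin hP hF ⟨e, hP_e⟩)
  have h_pair : ((g (t w.2)).1.1, w.2) = (g (t w.2)).1 := Prod.ext rfl h_argmin.1.symm
  have h_le : F (t w.2) ≤ F e := le_of_mem_fiberArgmin (P := P) (by rwa [hP_e])
  simp only [h_pair]
  exact ⟨(g (t w.2)).2, h_le.trans_eq (congrArg f he_val)⟩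

end SliceMinimizer

section Lifts

variable {X Z : Type*} [MeasurableSpace X] [MeasurableSpace Z]

/-- The feasible set of the relaxed problem: the finite measures carried by `K` whose marginal on
the parameter space `Z` is `φ`. -/
def liftsOn (K : Set (X × Z)) (φ : Measure Z) : Set (Measure (X × Z)) :=
  {μ | IsFiniteMeasure μ ∧ μ Kᶜ = 0 ∧ μ.map Prod.snd = φ}

/-- The set of minimizers `X*_y` of `f (·, y)` over the slice `A y`. -/
def sliceArgmin (f : X × Z → ℝ) (A : Z → Set X) (y : Z) : Set X :=
  {x ∈ A y | f (x, y) = sInf ((fun x => f (x, y)) '' A y)}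

variable {K : Set (X × Z)} {φ : Measure Z} {f : X × Z → ℝ} {μ : Measure (X × Z)}

theorem map_prodMk_mem_liftsOn [IsFiniteMeasure φ] (hK : MeasurableSet K) {s : Z → X}
    (hs : Measurable s) (hsK : ∀ᵐ y ∂φ, (s y, y) ∈ K) :
    φ.map (fun y => (s y, y)) ∈ liftsOn K φ := by
  have hs_graph : Measurable fun y => (s y, y) := hs.prodMk measurable_id
  refine ⟨inferInstance, ?_, ?_⟩
  · rwa [Measure.map_apply hs_graph hK.compl]
  · rw [Measure.map_map measurable_snd hs_graph]
    exact Measure.map_id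

theorem bddBelow_setIntegral_liftsOn (hf : Bornology.IsBounded (f '' K)) :
    BddBelow {r | ∃ ν ∈ liftsOn K φ, r = ∫ w in K, f w ∂ν} := by
  obtain ⟨M, hM⟩ := hf.exists_norm_le
  refine ⟨-(M * φ.real univ), ?_⟩
  rintro _ ⟨ν, ⟨_, hνK, rfl⟩, rfl⟩
  have h_mass : ν.real K = (ν.map Prod.snd).real univ := by
    rw [map_measureReal_apply measurable_snd MeasurableSet.univ, preimage_univ]
    exact measureReal_congr (eventuallyEq_univ.2 hνK)
  rw [← h_mass]
  exact neg_le_of_abs_le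
    (norm_setIntegral_le_of_norm_le_const (measure_lt_top ν K) fun w hw => hM _ ⟨w, hw, rfl⟩)

theorem ae_eq_section_of_isMinOn_liftsOn [IsFiniteMeasure φ] (hK : MeasurableSet K)
    (hf : ∀ ν ∈ liftsOn K φ, IntegrableOn f K ν) (hμ : μ ∈ liftsOn K φ)
    (hμ_min : IsMinOn (fun ν => ∫ w in K, f w ∂ν) (liftsOn K φ) μ)
    {s : Z → X} (hs : Measurable s) (hsK : ∀ᵐ y ∂φ, (s y, y) ∈ K)
    (hs_le : ∀ w ∈ K, f (s w.2, w.2) ≤ f w) :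
    ∀ᵐ w ∂μ, f (s w.2, w.2) = f w := by
  let σ : Measure (X × Z) := φ.map fun y => (s y, y)
  have hs_graph : Measurable fun y => (s y, y) := hs.prodMk measurable_id
  have hσ : σ ∈ liftsOn K φ := map_prodMk_mem_liftsOn hK hs hsK
  have restrict_eq {ν} (hν : ν ∈ liftsOn K φ) : ν.restrict K = ν :=
    Measure.restrict_eq_self_of_ae_mem hν.2.1
  have hfμ : Integrable f μ := by simpa only [IntegrableOn, restrict_eq hμ] using hf μ hμ
  have hfσ : Integrable f σ := by simpa only [IntegrableOn, restrict_eq hσ] using hf σ hσ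
  have hGφ : Integrable (fun y => f (s y, y)) (μ.map Prod.snd) :=
    hμ.2.2.symm ▸ hfσ.comp_measurable hs_graph
  have hσ_integral : ∫ w, f w ∂σ = ∫ w, f (s w.2, w.2) ∂μ := by
    rw [integral_map hs_graph.aemeasurable hfσ.1, ← hμ.2.2,
      integral_map measurable_snd.aemeasurable hGφ.1]
  have h_opt : ∫ w, f w ∂μ ≤ ∫ w, f (s w.2, w.2) ∂μ := by
    simpa only [restrict_eq hμ, restrict_eq hσ, hσ_integral] using isMinOn_iff.1 hμ_min σ hσ
  have h_le : (fun w => f (s w.2, w.2)) ≤ᵐ[μ] f := by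
    filter_upwards [show ∀ᵐ w ∂μ, w ∈ K from hμ.2.1] with w hw using hs_le w hw
  have hG : Integrable (fun w => f (s w.2, w.2)) μ := hGφ.comp_measurable measurable_snd
  exact (integral_eq_iff_of_ae_le hG hfμ h_le).1 ((integral_mono_ae hG hfμ h_le).antisymm h_opt)

theorem exists_kernel_of_ae_mem [StandardBorelSpace X] [Nonempty X] [IsFiniteMeasure μ]
    {A : Z → Set X} (hA : ∀ᵐ w ∂μ, w.1 ∈ A w.2) :
    ∃ ψ : ProbabilityTheory.Kernel Z X, ProbabilityTheory.IsMarkovKernel ψ ∧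
      (∀ᵐ y ∂μ.snd, ψ y (A y) = 1) ∧
      ∀ (C : Set X) (B : Set Z), MeasurableSet C → MeasurableSet B →
        μ (C ×ˢ B) = ∫⁻ y in B, ψ y (C ∩ A y) ∂μ.snd := by
  let ν : Measure (Z × X) := μ.map Prod.swap
  have h_disint : μ.snd.compProd ν.condKernel = ν := by
    rw [← Measure.fst_map_swap]; exact ν.disintegrate ν.condKernel
  have hAν : ∀ᵐ v ∂ν, v.2 ∈ A v.1 :=
    MeasurableEquiv.prodComm.measurableEmbedding.ae_map_iff.2 hA
  have hAψ : ∀ᵐ y ∂μ.snd, A y =ᵐ[ν.condKernel y] univ := by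
    filter_upwards [Measure.ae_ae_of_ae_compProd (h_disint.symm ▸ hAν)] with y hy
    exact eventuallyEq_univ.2 hy
  refine ⟨ν.condKernel, inferInstance, ?_, fun C B hC hB => ?_⟩
  · filter_upwards [hAψ] with y hy
    rw [measure_congr hy, measure_univ]
  · calc μ (C ×ˢ B) = ν (B ×ˢ C) := by
          rw [Measure.map_apply measurable_swap (hB.prod hC), preimage_swap_prod]
      _ = ∫⁻ y in B, ν.condKernel y C ∂μ.snd := by
          rw [← Measure.compProd_apply_prod hB hC, h_disint]
      _ = ∫⁻ y in B, ν.condKernel y (C ∩ A y) ∂μ.snd := by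
          refine lintegral_congr_ae (ae_restrict_of_ae ?_)
          filter_upwards [hAψ] with y hy
          simpa only [inter_univ] using measure_congr ((ae_eq_refl C).inter hy.symm)

end Lifts

theorem isBounded_image_of_lowerSemicontinuousOn {W : Type*} [TopologicalSpace W] {K : Set W}
    (hK : IsCompact K) {f : W → ℝ} (hf : LowerSemicontinuousOn f K)
    (hf_bdd : BddAbove (f '' K)) : Bornology.IsBounded (f '' K) :=
  isBounded_iff_bddBelow_bddAbove.2 ⟨hf.bddBelow_of_isCompact hK, hf_bdd⟩

theorem integrableOn_of_lowerSemicontinuousOn {W : Type*} [TopologicalSpace W] [MeasurableSpace W]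
    [OpensMeasurableSpace W] {μ : Measure W} [IsFiniteMeasure μ] {K : Set W}
    (hK : MeasurableSet K) {f : W → ℝ} (hf : LowerSemicontinuousOn f K)
    (hf_bdd : Bornology.IsBounded (f '' K)) : IntegrableOn f K μ := by
  obtain ⟨M, hM⟩ := hf_bdd.exists_norm_le
  have hf_meas : AEMeasurable f (μ.restrict K) := aemeasurable_restrict_of_measurable_subtype hK
    (lowerSemicontinuous_restrict_iff.2 hf).measurable
  exact Integrable.of_bound hf_meas.aestronglyMeasurable M
    (ae_restrict_of_forall_mem hK fun w hw => hM _ ⟨w, hw, rfl⟩)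

section General

variable {X Z : Type*} [TopologicalSpace X] [MetrizableSpace X] [SecondCountableTopology X]
  [MeasurableSpace X] [BorelSpace X] [Nonempty X] [TopologicalSpace Z] [MetrizableSpace Z]
  [MeasurableSpace Z] [OpensMeasurableSpace Z] {Y : Set Z} {A : Z → Set X} {K : Set (X × Z)}
  {f : X × Z → ℝ} {φ : Measure Z} [IsFiniteMeasure φ] {μ : Measure (X × Z)}

theorem ae_mem_sliceArgmin_of_isMinOn_liftsOn (hK_graph : K = {w | w.2 ∈ Y ∧ w.1 ∈ A w.2})
    (hK : IsCompact K) (hf : LowerSemicontinuousOn f K) (hf_bdd : BddAbove (f '' K))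
    (hμ : μ ∈ liftsOn K φ) (hμ_min : IsMinOn (fun ν => ∫ w in K, f w ∂ν) (liftsOn K φ) μ) :
    ∀ᵐ w ∂μ, w.1 ∈ sliceArgmin f A w.2 := by
  have hK_meas : MeasurableSet K := hK.measurableSet
  obtain ⟨s, hs, hs_min⟩ := exists_measurable_slice_minimizer hK
    (continuous_coe_real_ereal.comp_lowerSemicontinuousOn hf EReal.coe_strictMono.monotone)
  have hs_le : ∀ w ∈ K, f (s w.2, w.2) ≤ f w := fun w hw => EReal.coe_le_coe_iff.1 (hs_min w hw).2
  have hs_graph : Measurable fun y => (s y, y) := hs.prodMk measurable_id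
  have hμK : ∀ᵐ w ∂μ, w ∈ K := hμ.2.1
  have hsK : ∀ᵐ y ∂φ, (s y, y) ∈ K := by
    rw [← hμ.2.2, ae_map_iff measurable_snd.aemeasurable (hs_graph hK_meas)]
    filter_upwards [hμK] with w hw using (hs_min w hw).1
  have h_int : ∀ ν ∈ liftsOn K φ, IntegrableOn f K ν := fun ν hν =>
    have := hν.1
    integrableOn_of_lowerSemicontinuousOn hK_meas hf
      (isBounded_image_of_lowerSemicontinuousOn hK hf hf_bdd)
  filter_upwards [hμK, ae_eq_section_of_isMinOn_liftsOn hK_meas h_int hμ hμ_min hs hsK hs_le]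
    with w hw hw_eq
  have hw_graph : w.2 ∈ Y ∧ w.1 ∈ A w.2 := by rwa [hK_graph] at hw
  have h_least : IsLeast ((fun x => f (x, w.2)) '' A w.2) (f w) := by
    refine ⟨⟨w.1, hw_graph.2, rfl⟩, forall_mem_image.2 fun x hx => ?_⟩
    have hxK : (x, w.2) ∈ K := by rw [hK_graph]; exact ⟨hw_graph.1, hx⟩
    exact hw_eq.symm.trans_le (hs_le _ hxK)
  exact ⟨hw_graph.2, h_least.csInf_eq.symm⟩

theorem stmt3_general [StandardBorelSpace X]
    (hK_graph : K = {w | w.2 ∈ Y ∧ w.1 ∈ A w.2}) (hK : IsCompact K)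
    (hf : LowerSemicontinuousOn f K) (hf_bdd : BddAbove (f '' K)) (hμ : μ ∈ liftsOn K φ)
    (hμ_opt : ∫ w in K, f w ∂μ = sInf {r | ∃ ν ∈ liftsOn K φ, r = ∫ w in K, f w ∂ν}) :
    ∃ ψ : ProbabilityTheory.Kernel Z X, ProbabilityTheory.IsMarkovKernel ψ ∧
      (∀ᵐ y ∂φ, ψ y (sliceArgmin f A y) = 1) ∧
      ∀ (C : Set X) (B : Set Z), MeasurableSet C → MeasurableSet B →
        μ (C ×ˢ B) = ∫⁻ y in B ∩ Y, ψ y (C ∩ sliceArgmin f A y) ∂φ := by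
  have hfK := isBounded_image_of_lowerSemicontinuousOn hK hf hf_bdd
  have hμ_min : IsMinOn (fun ν => ∫ w in K, f w ∂ν) (liftsOn K φ) μ := fun ν hν =>
    hμ_opt.trans_le (csInf_le (bddBelow_setIntegral_liftsOn hfK) ⟨ν, hν, rfl⟩)
  have h_argmin := ae_mem_sliceArgmin_of_isMinOn_liftsOn hK_graph hK hf hf_bdd hμ hμ_min
  obtain ⟨hμ_fin, (hμK : ∀ᵐ w ∂μ, w ∈ K), hμ_snd⟩ := hμ
  obtain ⟨ψ, hψ, hψ_argmin, hψ_disint⟩ := exists_kernel_of_ae_mem h_argmin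
  have hY : ∀ᵐ y ∂φ, y ∈ Y := by
    have hK_snd : ∀ᵐ y ∂μ.map Prod.snd, y ∈ Prod.snd '' K :=
      (ae_map_iff measurable_snd.aemeasurable (hK.image continuous_snd).measurableSet).2
        (hμK.mono fun w hw => ⟨w, hw, rfl⟩)
    filter_upwards [hμ_snd ▸ hK_snd]
    rintro _ ⟨w, hw, rfl⟩
    exact (hK_graph ▸ hw : w ∈ {w | w.2 ∈ Y ∧ w.1 ∈ A w.2}).1
  have hBY (B : Set Z) : φ.restrict (B ∩ Y) = φ.restrict B := by
    refine Measure.restrict_congr_set (inter_ae_eq_left_of_ae_eq_univ ?_)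
    exact eventuallyEq_univ.2 hY
  rw [Measure.snd, hμ_snd] at hψ_argmin hψ_disint
  exact ⟨ψ, hψ, hψ_argmin, fun C B hC hB => by rw [hBY, hψ_disint C B hC hB]⟩

end General

/-- disintegration of any optimal solution `μ*` of `P` via a stochastic
kernel `ψ*` concentrated on the sets of minimizers `X*_y`. -/
theorem stmt3 (n p m : ℕ)
    (Y : Set (Fin p → ℝ)) (hYc : IsCompact Y)
    (f : (Fin n → ℝ) × (Fin p → ℝ) → ℝ) (hf : Continuous f)
    (h : Fin m → (Fin n → ℝ) × (Fin p → ℝ) → ℝ) (hh : ∀ j, Continuous (h j))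
    (K : Set ((Fin n → ℝ) × (Fin p → ℝ)))
    (hKdef : K = {w | w.2 ∈ Y ∧ ∀ j, 0 ≤ h j w}) (hKc : IsCompact K)
    (Ky : (Fin p → ℝ) → Set (Fin n → ℝ))
    (hKy : ∀ y, Ky y = {x | ∀ j, 0 ≤ h j (x, y)})
    (hne : ∀ y ∈ Y, (Ky y).Nonempty)
    (J : (Fin p → ℝ) → ℝ)
    (hJ : ∀ y, J y = sInf ((fun x => f (x, y)) '' Ky y))
    (Xstar : (Fin p → ℝ) → Set (Fin n → ℝ))
    (hXs : ∀ y, Xstar y = {x ∈ Ky y | f (x, y) = J y})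
    (φ : Measure (Fin p → ℝ)) [IsProbabilityMeasure φ] (hφY : φ Yᶜ = 0)
    (ρ : ℝ)
    (hρ : ρ = sInf {r | ∃ μ : Measure ((Fin n → ℝ) × (Fin p → ℝ)),
      IsFiniteMeasure μ ∧ μ Kᶜ = 0 ∧ μ.map Prod.snd = φ ∧ r = ∫ w in K, f w ∂μ})
    (μstar : Measure ((Fin n → ℝ) × (Fin p → ℝ))) (hμfin : IsFiniteMeasure μstar)
    (hμK : μstar Kᶜ = 0) (hμmarg : μstar.map Prod.snd = φ)
    (hμopt : ∫ w in K, f w ∂μstar = ρ) :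
    ∃ ψ : (Fin p → ℝ) → Measure (Fin n → ℝ),
      (∀ y, IsProbabilityMeasure (ψ y)) ∧
      (∀ C : Set (Fin n → ℝ), MeasurableSet C → Measurable (fun y => ψ y C)) ∧
      (∀ᵐ y ∂φ, ψ y (Xstar y) = 1) ∧
      (∀ (C : Set (Fin n → ℝ)) (B : Set (Fin p → ℝ)), MeasurableSet C → MeasurableSet B →
        μstar (C ×ˢ B) = ∫⁻ y in B ∩ Y, ψ y (C ∩ Xstar y) ∂φ) := by
  obtain rfl : Xstar = sliceArgmin f Ky := funext fun y => by rw [hXs, hJ]; rfl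
  obtain ⟨ψ, hψ, hψX, hψ_disint⟩ := stmt3_general (A := Ky)
    (by simpa only [hKy, mem_ofPred_eq] using hKdef) hKc
    (hf.lowerSemicontinuous.lowerSemicontinuousOn K) (hKc.bddAbove_image hf.continuousOn)
    ⟨hμfin, hμK, hμmarg⟩
    (by simpa only [liftsOn, mem_ofPred_eq, and_assoc] using hμopt.trans hρ)
  exact ⟨ψ, hψ.isProbabilityMeasure, fun C hC => ψ.measurable_coe hC, hψX, hψ_disint⟩
end

section
/- Suppose Y ⊂ ℝ^p and K are compact and K_y is nonempty for every y ∈ Y. Let (p_i)_{i∈ℕ} ⊂ ℝ[y] satisfy f − p_i ≥ 0 on K for all i and ∫_Y p_i dφ → sup{ ∫_Y p dφ : p ∈ ℝ[y], f − p ≥ 0 on K }, and define p̃_0 := p_0 and p̃_i(y) := max(p̃_{i−1}(y), p_i(y)) for i ≥ 1. Then p̃_i → J almost uniformly on Y with respect to φ, i.e., for every ε > 0 there is a Borel set A ⊂ Y with φ(A) < ε such that p̃_i → J uniformly on Y \ A. -/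
open MeasureTheory Set TopologicalSpace Filter Topology

/-!
By compactness of `K` the value function `J` is lower semicontinuous on `Y`, so it is the increasing
limit of continuous functions `g k`. Each `g k` is, up to a small downward shift, uniformly
approximated on `Y` by polynomials, which stay below `J` and are therefore feasible. Hence the dual
problem has no gap: its supremum is `∫ J`. The running maxima of a maximizing sequence are squeezed
between that sequence and `J`, so their integrals tend to `∫ J`; being monotone, they converge to
`J` almost everywhere, and Egorov's theorem makes the convergence almost uniform.
-/

open scoped NNReal ENNReal

section ValueFunction

variable {X E : Type*}

/-- The graph over `Y` of a set-valued map `S`, that is, the feasible set of the parametric program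
with parameter `y ∈ Y` and constraint `x ∈ S y`. Decisions come before parameters in the pairs. -/
def graphOver (S : E → Set X) (Y : Set E) : Set (X × E) :=
  {w | w.2 ∈ Y ∧ w.1 ∈ S w.2}

/-- The optimal value `y ↦ inf {f (x, y) | x ∈ S y}` of a parametric program, as a real number: it
is `0` where `S y` is empty or `f (·, y)` is unbounded below on it. -/
noncomputable def valueFunction (f : X × E → ℝ) (S : E → Set X) (y : E) : ℝ :=
  sInf ((fun x => f (x, y)) '' S y)

variable {f : X × E → ℝ} {S : E → Set X} {Y : Set E}

theorem snd_image_graphOver (hS : ∀ y ∈ Y, (S y).Nonempty) : Prod.snd '' graphOver S Y = Y := by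
  refine (image_subset_iff.2 fun _ hw => hw.1).antisymm fun y hy => ?_
  obtain ⟨x, hx⟩ := hS y hy
  exact ⟨(x, y), ⟨hy, hx⟩, rfl⟩

theorem isGLB_valueFunction (hf : BddBelow (f '' graphOver S Y)) {y : E} (hy : y ∈ Y)
    (hSy : (S y).Nonempty) : IsGLB ((fun x => f (x, y)) '' S y) (valueFunction f S y) := by
  refine isGLB_csInf (hSy.image _) (hf.mono ?_)
  rintro _ ⟨x, hx, rfl⟩
  exact ⟨(x, y), ⟨hy, hx⟩, rfl⟩

theorem le_valueFunction_iff (hf : BddBelow (f '' graphOver S Y)) {y : E} (hy : y ∈ Y)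
    (hSy : (S y).Nonempty) {c : ℝ} : c ≤ valueFunction f S y ↔ ∀ x ∈ S y, c ≤ f (x, y) := by
  rw [le_isGLB_iff (isGLB_valueFunction hf hy hSy), mem_lowerBounds, forall_mem_image]

theorem forall_le_valueFunction_iff (hf : BddBelow (f '' graphOver S Y))
    (hS : ∀ y ∈ Y, (S y).Nonempty) {q : E → ℝ} :
    (∀ y ∈ Y, q y ≤ valueFunction f S y) ↔ ∀ w ∈ graphOver S Y, q w.2 ≤ f w :=
  ⟨fun h w hw => (le_valueFunction_iff hf hw.1 (hS _ hw.1)).1 (h _ hw.1) w.1 hw.2,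
    fun h y hy => (le_valueFunction_iff hf hy (hS y hy)).2 fun x hx => h (x, y) ⟨hy, hx⟩⟩

theorem valueFunction_le (hf : BddBelow (f '' graphOver S Y)) {w : X × E}
    (hw : w ∈ graphOver S Y) : valueFunction f S w.2 ≤ f w :=
  (le_valueFunction_iff hf hw.1 ⟨w.1, hw.2⟩).1 le_rfl w.1 hw.2

theorem bddAbove_valueFunction_image (hfb : BddBelow (f '' graphOver S Y))
    (hfa : BddAbove (f '' graphOver S Y)) (hS : ∀ y ∈ Y, (S y).Nonempty) :
    BddAbove (valueFunction f S '' Y) := by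
  obtain ⟨b, hb⟩ := hfa
  refine ⟨b, forall_mem_image.2 fun y hy => ?_⟩
  obtain ⟨x, hx⟩ := hS y hy
  exact (valueFunction_le hfb (w := (x, y)) ⟨hy, hx⟩).trans (hb ⟨(x, y), ⟨hy, hx⟩, rfl⟩)

variable [TopologicalSpace X] [TopologicalSpace E]

theorem lowerSemicontinuousOn_valueFunction [T2Space E] (hK : IsCompact (graphOver S Y))
    (hf : LowerSemicontinuousOn f (graphOver S Y)) (hS : ∀ y ∈ Y, (S y).Nonempty) :
    LowerSemicontinuousOn (valueFunction f S) Y := by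
  have hfb := hf.bddBelow_of_isCompact hK
  intro y hy a ha
  obtain ⟨c, hac, hc⟩ := exists_between ha
  set B : Set E := Prod.snd '' (graphOver S Y ∩ f ⁻¹' Iic c)
  have hBclosed : IsClosed B :=
    ((hf.isCompact_inter_preimage_Iic hK c).image continuous_snd).isClosed
  have hyB : y ∉ B := by
    rintro ⟨w, ⟨hw, hwc⟩, rfl⟩
    exact hc.not_ge ((valueFunction_le hfb hw).trans hwc)
  filter_upwards [nhdsWithin_le_nhds (hBclosed.isOpen_compl.mem_nhds hyB), self_mem_nhdsWithin]
    with z hzB hz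
  refine hac.trans_le ((le_valueFunction_iff hfb hz (hS z hz)).2 fun x hx => ?_)
  exact (not_le.1 fun hxc => hzB ⟨(x, z), ⟨⟨hz, hx⟩, hxc⟩, rfl⟩).le

end ValueFunction

section LipschitzEnvelope

variable {E : Type*} [PseudoMetricSpace E] {J : E → ℝ} {Y : Set E}

/-- The Pasch–Hausdorff envelope of `J` on `Y`: where `J` is bounded below on `Y`, the largest
`k`-Lipschitz function on the whole space whose restriction to `Y` lies below `J`. -/
noncomputable def lipschitzEnvelope (J : E → ℝ) (Y : Set E) (k : ℝ≥0) (y : E) : ℝ :=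
  ⨅ z : Y, (J z + k * dist y z)

theorem bddBelow_range_add_mul_dist (hJ : BddBelow (J '' Y)) (k : ℝ≥0) (y : E) :
    BddBelow (range fun z : Y => J z + k * dist y z) := by
  obtain ⟨a, ha⟩ := hJ
  refine ⟨a, forall_mem_range.2 fun z => ?_⟩
  exact (ha (mem_image_of_mem J z.2)).trans (le_add_of_nonneg_right (by positivity))

theorem lipschitzEnvelope_le_add_mul_dist (hJ : BddBelow (J '' Y)) (k : ℝ≥0) (y : E) {z : E}
    (hz : z ∈ Y) : lipschitzEnvelope J Y k y ≤ J z + k * dist y z :=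
  ciInf_le (bddBelow_range_add_mul_dist hJ k y) ⟨z, hz⟩

theorem lipschitzEnvelope_le (hJ : BddBelow (J '' Y)) (k : ℝ≥0) {y : E} (hy : y ∈ Y) :
    lipschitzEnvelope J Y k y ≤ J y := by
  simpa using lipschitzEnvelope_le_add_mul_dist hJ k y hy

theorem lipschitzWith_lipschitzEnvelope (hJ : BddBelow (J '' Y)) (k : ℝ≥0) :
    LipschitzWith k (lipschitzEnvelope J Y k) := by
  rcases Y.eq_empty_or_nonempty with rfl | hY
  · have hzero : lipschitzEnvelope J ∅ k = fun _ => 0 := funext fun _ => Real.iInf_of_isEmpty _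
    exact hzero ▸ (LipschitzWith.const 0).weaken zero_le
  have : Nonempty Y := hY.to_subtype
  refine LipschitzWith.of_le_add_mul k fun x y => ?_
  rw [← sub_le_iff_le_add]
  refine le_ciInf fun z => sub_le_iff_le_add.2 ?_
  calc lipschitzEnvelope J Y k x ≤ J z + k * dist x z :=
        lipschitzEnvelope_le_add_mul_dist hJ k x z.2
    _ ≤ J z + k * (dist x y + dist y z) := by gcongr; exact dist_triangle x y z
    _ = J z + k * dist y z + k * dist x y := by ring

theorem monotone_lipschitzEnvelope (hJ : BddBelow (J '' Y)) (y : E) :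
    Monotone fun k => lipschitzEnvelope J Y k y := fun k l hkl =>
  ciInf_mono (bddBelow_range_add_mul_dist hJ k y) fun z => by gcongr

theorem tendsto_lipschitzEnvelope (hJ : LowerSemicontinuousOn J Y) (hJb : BddBelow (J '' Y))
    {y : E} (hy : y ∈ Y) :
    Tendsto (fun k => lipschitzEnvelope J Y k y) atTop (𝓝 (J y)) := by
  have : Nonempty Y := ⟨⟨y, hy⟩⟩
  refine tendsto_order.2 ⟨fun a ha => ?_, fun a ha =>
    .of_forall fun k => (lipschitzEnvelope_le hJb k hy).trans_lt ha⟩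
  obtain ⟨c, hac, hc⟩ := exists_between ha
  obtain ⟨δ, hδ, hnear⟩ := Metric.mem_nhdsWithin_iff.1 (hJ y hy c hc)
  obtain ⟨b, hb⟩ := hJb
  have hlarge : ∀ᶠ k : ℝ≥0 in atTop, c - b ≤ k * δ :=
    (NNReal.tendsto_coe_atTop.2 tendsto_id |>.atTop_mul_const hδ).eventually_ge_atTop _
  filter_upwards [hlarge] with k hk
  refine hac.trans_le (le_ciInf fun z => ?_)
  rcases lt_or_ge (dist y z) δ with hzδ | hzδ
  · have hcz : c < J z := hnear ⟨Metric.mem_ball'.2 hzδ, z.2⟩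
    exact hcz.le.trans (le_add_of_nonneg_right (by positivity))
  · calc c ≤ b + k * δ := by linarith
      _ ≤ J z + k * dist y z := by
        gcongr
        exact hb (mem_image_of_mem J z.2)

theorem exists_monotone_tendsto_of_lowerSemicontinuousOn (hJ : LowerSemicontinuousOn J Y)
    (hJb : BddBelow (J '' Y)) :
    ∃ g : ℕ → C(E, ℝ), (∀ y, Monotone fun k => g k y) ∧
      ∀ y ∈ Y, Tendsto (fun k => g k y) atTop (𝓝 (J y)) :=
  ⟨fun k => ⟨lipschitzEnvelope J Y k, (lipschitzWith_lipschitzEnvelope hJb k).continuous⟩,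
    fun y => (monotone_lipschitzEnvelope hJb y).comp Nat.mono_cast,
    fun _ hy => (tendsto_lipschitzEnvelope hJ hJb hy).comp tendsto_natCast_atTop_atTop⟩

end LipschitzEnvelope

section UniformApproximation

theorem dense_iff_forall_isCompact_exists_dist_lt {E F : Type*} [TopologicalSpace E]
    [PseudoMetricSpace F] {s : Set C(E, F)} :
    Dense s ↔ ∀ (g : C(E, F)) (Y : Set E), IsCompact Y → ∀ ε > 0,
      ∃ u ∈ s, ∀ y ∈ Y, dist (u y) (g y) < ε := by
  refine forall_congr' fun g => ?_
  rw [mem_closure_iff_nhds_basis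
    (nhds_basis_uniformity Metric.uniformity_basis_dist.compactConvergenceUniformity)]
  simp only [Prod.forall, and_imp, mem_ofPred_eq]
  exact forall_congr' fun Y => forall_comm

theorem dense_of_separatesPoints {E : Type*} [TopologicalSpace E]
    {A : Subalgebra ℝ C(E, ℝ)} (hA : A.SeparatesPoints) : Dense (A : Set C(E, ℝ)) :=
  dense_iff_forall_isCompact_exists_dist_lt.2 fun g _ hY _ hε =>
    ContinuousMap.exists_mem_subalgebra_near_continuous_of_isCompact_of_separatesPoints hA g hY hε

/-- Real polynomials in the variables `σ` as continuous functions on `σ → ℝ`, bundled as an algebra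
homomorphism so that its range is a subalgebra to which the Stone–Weierstrass theorem applies. -/
noncomputable def mvPolynomialToContinuousMap (σ : Type*) :
    MvPolynomial σ ℝ →ₐ[ℝ] C(σ → ℝ, ℝ) where
  toFun q := ⟨fun y => MvPolynomial.eval y q, MvPolynomial.continuous_eval q⟩
  map_one' := by ext; simp
  map_mul' _ _ := by ext; simp
  map_zero' := by ext; simp
  map_add' _ _ := by ext; simp
  commutes' _ := by ext; simp [MvPolynomial.algebraMap_eq]

theorem denseRange_mvPolynomialToContinuousMap (σ : Type*) :
    DenseRange (mvPolynomialToContinuousMap σ) := by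
  have hsep : (mvPolynomialToContinuousMap σ).range.SeparatesPoints := by
    intro x y hxy
    obtain ⟨i, hi⟩ := Function.ne_iff.1 hxy
    exact ⟨_, ⟨_, ⟨MvPolynomial.X i, rfl⟩, rfl⟩, by simpa [mvPolynomialToContinuousMap] using hi⟩
  simpa [DenseRange] using dense_of_separatesPoints hsep

theorem exists_forall_mem_Ioo_of_denseRange {E ι : Type*} [TopologicalSpace E] {Q : ι → C(E, ℝ)}
    (hQ : DenseRange Q) {Y : Set E} (hY : IsCompact Y) (g : C(E, ℝ)) {δ : ℝ} (hδ : 0 < δ) :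
    ∃ i, ∀ y ∈ Y, Q i y ∈ Ioo (g y - δ) (g y) := by
  obtain ⟨_, ⟨i, rfl⟩, hi⟩ := dense_iff_forall_isCompact_exists_dist_lt.1 hQ
    (g - ContinuousMap.const E (δ / 2)) Y hY (δ / 2) (half_pos hδ)
  refine ⟨i, fun y hy => ?_⟩
  have hclose : |Q i y - (g y - δ / 2)| < δ / 2 := hi y hy
  rw [abs_lt] at hclose
  constructor <;> linarith

end UniformApproximation

section Duality

variable {E ι : Type*} [MeasurableSpace E] {μ : Measure E} {J : E → ℝ} {Y : Set E}

theorem integrableOn_of_lowerSemicontinuousOn_s8 [TopologicalSpace E] [T2Space E]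
    [OpensMeasurableSpace E] [IsFiniteMeasureOnCompacts μ] (hY : IsCompact Y)
    (hJ : LowerSemicontinuousOn J Y) (hJa : BddAbove (J '' Y)) : IntegrableOn J Y μ := by
  have hmeas : AEStronglyMeasurable J (μ.restrict Y) :=
    (aemeasurable_restrict_of_measurable_subtype hY.measurableSet
      (lowerSemicontinuous_restrict_iff.2 hJ).measurable).aestronglyMeasurable
  obtain ⟨C, hC⟩ := isBounded_iff_forall_norm_le.1
    (isBounded_iff_bddBelow_bddAbove.2 ⟨hJ.bddBelow_of_isCompact hY, hJa⟩)
  exact .of_bound hY.measure_lt_top hmeas C <| ae_restrict_of_forall_mem hY.measurableSet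
    fun y hy => hC _ (mem_image_of_mem J hy)

theorem setIntegral_le_of_mem_upperBounds [TopologicalSpace E] [T2Space E]
    [OpensMeasurableSpace E] [IsFiniteMeasureOnCompacts μ] {Q : ι → C(E, ℝ)} (hQ : DenseRange Q)
    (hY : IsCompact Y) {g : C(E, ℝ)} (hg : ∀ y ∈ Y, g y ≤ J y) {b : ℝ}
    (hb : b ∈ upperBounds {r | ∃ i, (∀ y ∈ Y, Q i y ≤ J y) ∧ r = ∫ y in Y, Q i y ∂μ}) :
    ∫ y in Y, g y ∂μ ≤ b := by
  have hint (u : C(E, ℝ)) : IntegrableOn u Y μ := u.continuous.continuousOn.integrableOn_compact hY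
  have hshift : ∀ δ > 0, ∫ y in Y, g y ∂μ - μ.real Y * δ ≤ b := by
    intro δ hδ
    have hconst : IntegrableOn (fun _ => δ) Y μ := hint (.const E δ)
    obtain ⟨i, hi⟩ := exists_forall_mem_Ioo_of_denseRange hQ hY g hδ
    calc ∫ y in Y, g y ∂μ - μ.real Y * δ = ∫ y in Y, (g y - δ) ∂μ := by
          rw [integral_sub (hint g) hconst, setIntegral_const, smul_eq_mul]
      _ ≤ ∫ y in Y, Q i y ∂μ :=
          setIntegral_mono_on ((hint g).sub hconst) (hint _) hY.measurableSet
            fun y hy => (hi y hy).1.le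
      _ ≤ b := hb ⟨i, fun y hy => (hi y hy).2.le.trans (hg y hy), rfl⟩
  have hlim : Tendsto (fun δ => ∫ y in Y, g y ∂μ - μ.real Y * δ) (𝓝[>] 0)
      (𝓝 (∫ y in Y, g y ∂μ)) :=
    tendsto_nhdsWithin_of_tendsto_nhds (Continuous.tendsto' (by fun_prop) _ _ (by simp))
  exact le_of_tendsto hlim (eventually_mem_nhdsWithin.mono hshift)

theorem isLUB_setIntegral_of_denseRange [MetricSpace E] [OpensMeasurableSpace E]
    [IsFiniteMeasureOnCompacts μ] {Q : ι → C(E, ℝ)} (hQ : DenseRange Q) (hY : IsCompact Y)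
    (hJ : LowerSemicontinuousOn J Y) (hJint : IntegrableOn J Y μ) :
    IsLUB {r | ∃ i, (∀ y ∈ Y, Q i y ≤ J y) ∧ r = ∫ y in Y, Q i y ∂μ} (∫ y in Y, J y ∂μ) := by
  have hint (u : C(E, ℝ)) : IntegrableOn u Y μ := u.continuous.continuousOn.integrableOn_compact hY
  refine ⟨?_, fun b hb => ?_⟩
  · rintro _ ⟨i, hi, rfl⟩
    exact setIntegral_mono_on (hint _) hJint hY.measurableSet hi
  obtain ⟨g, hgmono, hglim⟩ :=
    exists_monotone_tendsto_of_lowerSemicontinuousOn hJ (hJ.bddBelow_of_isCompact hY)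
  have hglim_int : Tendsto (fun k => ∫ y in Y, g k y ∂μ) atTop (𝓝 (∫ y in Y, J y ∂μ)) :=
    integral_tendsto_of_tendsto_of_monotone (fun k => hint (g k)) hJint (.of_forall hgmono)
      (ae_restrict_of_forall_mem hY.measurableSet hglim)
  exact le_of_tendsto' hglim_int fun k => setIntegral_le_of_mem_upperBounds hQ hY
    (fun y hy => (hgmono y).ge_of_tendsto (hglim y hy) k) hb

end Duality

section AlmostUniform

variable {α : Type*} [MeasurableSpace α] {μ : Measure α} {s : Set α}

theorem exists_tendstoUniformlyOn_of_ae_tendsto_restrict {β : Type*} [PseudoMetricSpace β]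
    {u : ℕ → α → β} {J : α → β} (hs : MeasurableSet s) (hμs : μ s ≠ ∞)
    (hu : ∀ i, AEStronglyMeasurable (u i) (μ.restrict s))
    (hJ : AEStronglyMeasurable J (μ.restrict s))
    (hlim : ∀ᵐ x ∂μ.restrict s, Tendsto (fun i => u i x) atTop (𝓝 (J x))) {ε : ℝ≥0∞} (hε : 0 < ε) :
    ∃ A ⊆ s, MeasurableSet A ∧ μ A < ε ∧ TendstoUniformlyOn u J atTop (s \ A) := by
  have : IsFiniteMeasure (μ.restrict s) := ⟨by simpa using hμs.lt_top⟩
  obtain ⟨δ, hδ, hδε⟩ := ENNReal.lt_iff_exists_nnreal_btwn.1 hε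
  have heq : ∀ᵐ x ∂μ.restrict s, (∀ i, u i x = (hu i).mk _ x) ∧ J x = hJ.mk _ x :=
    (ae_all_iff.2 fun i => (hu i).ae_eq_mk).and hJ.ae_eq_mk
  have hlim_mk : ∀ᵐ x ∂μ.restrict s, Tendsto (fun i => (hu i).mk _ x) atTop (𝓝 (hJ.mk _ x)) := by
    filter_upwards [hlim, heq] with x hx ⟨hux, hJx⟩
    simpa only [hux, hJx] using hx
  obtain ⟨T, hT, hμT, hunif⟩ := tendstoUniformlyOn_of_ae_tendsto'
    (fun i => (hu i).stronglyMeasurable_mk) hJ.stronglyMeasurable_mk hlim_mk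
    (NNReal.coe_pos.2 (ENNReal.coe_pos.1 hδ))
  obtain ⟨N, hN, hNmeas, hμN⟩ := exists_measurable_superset_of_null heq
  have hmk : ∀ x ∈ Nᶜ, (∀ i, u i x = (hu i).mk _ x) ∧ J x = hJ.mk _ x :=
    fun x hx => not_not.1 fun h => hx (hN h)
  refine ⟨s ∩ (T ∪ N), inter_subset_left, hs.inter (hT.union hNmeas), ?_, ?_⟩
  · calc μ (s ∩ (T ∪ N)) = μ.restrict s (T ∪ N) := by
          rw [Measure.restrict_apply (hT.union hNmeas), inter_comm]
      _ ≤ μ.restrict s T + μ.restrict s N := measure_union_le _ _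
      _ ≤ δ := by simpa [hμN] using hμT
      _ < ε := hδε
  · have hsub : s \ (s ∩ (T ∪ N)) ⊆ Tᶜ ∩ Nᶜ := fun x hx =>
      ⟨fun h => hx.2 ⟨hx.1, .inl h⟩, fun h => hx.2 ⟨hx.1, .inr h⟩⟩
    refine ((hunif.mono (hsub.trans inter_subset_left)).congr
      (.of_forall fun i x hx => ((hmk x (hsub hx).2).1 i).symm)).congr_right
      fun x hx => (hmk x (hsub hx).2).2.symm

theorem integrable_partialSups {q : ℕ → α → ℝ} (hq : ∀ i, Integrable (q i) μ) (i : ℕ) :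
    Integrable (partialSups q i) μ := by
  induction i with
  | zero => simpa only [partialSups_zero] using hq 0
  | succ i ih => simpa only [partialSups_add_one] using ih.sup (hq (i + 1))

theorem exists_tendstoUniformlyOn_partialSups_of_setIntegral_tendsto {q : ℕ → α → ℝ} {J : α → ℝ}
    (hs : MeasurableSet s) (hμs : μ s ≠ ∞) (hq : ∀ i, IntegrableOn (q i) s μ)
    (hJ : IntegrableOn J s μ) (hle : ∀ i, ∀ x ∈ s, q i x ≤ J x)
    (hlim : Tendsto (fun i => ∫ x in s, q i x ∂μ) atTop (𝓝 (∫ x in s, J x ∂μ)))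
    {ε : ℝ≥0∞} (hε : 0 < ε) :
    ∃ A ⊆ s, MeasurableSet A ∧ μ A < ε ∧
      TendstoUniformlyOn (partialSups q) J atTop (s \ A) := by
  have hint : ∀ i, IntegrableOn (partialSups q i) s μ := integrable_partialSups hq
  have hle_sup : ∀ x ∈ s, ∀ i, partialSups q i x ≤ J x := fun x hx i => by
    rw [Pi.partialSups_apply]
    exact partialSups_le _ i _ fun j _ => hle j x hx
  have hlim_sup : Tendsto (fun i => ∫ x in s, partialSups q i x ∂μ) atTop
      (𝓝 (∫ x in s, J x ∂μ)) :=
    tendsto_of_tendsto_of_tendsto_of_le_of_le hlim tendsto_const_nhds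
      (fun i => integral_mono (hq i) (hint i) (le_partialSups q i))
      fun i => setIntegral_mono_on (hint i) hJ hs fun x hx => hle_sup x hx i
  have hae : ∀ᵐ x ∂μ.restrict s, Tendsto (fun i => partialSups q i x) atTop (𝓝 (J x)) :=
    tendsto_of_integral_tendsto_of_monotone hint hJ hlim_sup
      (.of_forall fun x _ _ hij => (partialSups q).monotone hij x)
      (ae_restrict_of_forall_mem hs hle_sup)
  exact exists_tendstoUniformlyOn_of_ae_tendsto_restrict hs hμs
    (fun i => (hint i).aestronglyMeasurable) hJ.aestronglyMeasurable hae hε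

end AlmostUniform

theorem eq_partialSups {α : Type*} [SemilatticeSup α] {u v : ℕ → α} (h0 : v 0 = u 0)
    (hsucc : ∀ i, v (i + 1) = v i ⊔ u (i + 1)) : v = partialSups u := by
  ext1 i
  induction i with
  | zero => rw [h0, partialSups_zero]
  | succ i ih => rw [hsucc, ih, partialSups_add_one]

theorem integrableOn_valueFunction {X E : Type*} [TopologicalSpace X] [TopologicalSpace E]
    [T2Space E] [MeasurableSpace E] [OpensMeasurableSpace E] {Y : Set E} {S : E → Set X}
    {f : X × E → ℝ} (hK : IsCompact (graphOver S Y))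
    (hf : LowerSemicontinuousOn f (graphOver S Y))
    (hS : ∀ y ∈ Y, (S y).Nonempty) (hfa : BddAbove (f '' graphOver S Y)) {φ : Measure E}
    [IsFiniteMeasureOnCompacts φ] : IntegrableOn (valueFunction f S) Y φ :=
  integrableOn_of_lowerSemicontinuousOn_s8 (snd_image_graphOver hS ▸ hK.image continuous_snd)
    (lowerSemicontinuousOn_valueFunction hK hf hS)
    (bddAbove_valueFunction_image (hf.bddBelow_of_isCompact hK) hfa hS)

theorem stmt8_general {X E ι : Type*} [TopologicalSpace X] [MetricSpace E] [MeasurableSpace E]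
    [OpensMeasurableSpace E] {Y : Set E} {S : E → Set X} {f : X × E → ℝ}
    (hK : IsCompact (graphOver S Y)) (hf : LowerSemicontinuousOn f (graphOver S Y))
    (hS : ∀ y ∈ Y, (S y).Nonempty) {φ : Measure E} [IsFiniteMeasureOnCompacts φ]
    (hJ : IntegrableOn (valueFunction f S) Y φ) {Q : ι → C(E, ℝ)} (hQ : DenseRange Q) {q : ℕ → ι}
    (hfeas : ∀ i, ∀ w ∈ graphOver S Y, Q (q i) w.2 ≤ f w)
    (hmax : Tendsto (fun i => ∫ y in Y, Q (q i) y ∂φ) atTop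
      (𝓝 (sSup {r | ∃ i, (∀ w ∈ graphOver S Y, Q i w.2 ≤ f w) ∧ r = ∫ y in Y, Q i y ∂φ})))
    {ε : ℝ≥0∞} (hε : 0 < ε) :
    ∃ A ⊆ Y, MeasurableSet A ∧ φ A < ε ∧
      TendstoUniformlyOn (partialSups fun i => ⇑(Q (q i))) (valueFunction f S) atTop (Y \ A) := by
  have hY : IsCompact Y := snd_image_graphOver hS ▸ hK.image continuous_snd
  simp only [← forall_le_valueFunction_iff (hf.bddBelow_of_isCompact hK) hS] at hfeas hmax
  rw [(isLUB_setIntegral_of_denseRange hQ hY (lowerSemicontinuousOn_valueFunction hK hf hS)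
    hJ).csSup_eq ⟨_, q 0, hfeas 0, rfl⟩] at hmax
  exact exists_tendstoUniformlyOn_partialSups_of_setIntegral_tendsto hY.measurableSet
    hY.measure_ne_top (fun i => (Q (q i)).continuous.continuousOn.integrableOn_compact hY) hJ hfeas
    hmax hε

/-- the running maxima of a maximizing sequence of dual polynomials
converge to `J` almost uniformly on `Y` with respect to `φ`. -/
theorem stmt8 (n p m : ℕ)
    (Y : Set (Fin p → ℝ)) (hYc : IsCompact Y)
    (f : (Fin n → ℝ) × (Fin p → ℝ) → ℝ) (hf : Continuous f)
    (h : Fin m → (Fin n → ℝ) × (Fin p → ℝ) → ℝ) (hh : ∀ j, Continuous (h j))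
    (K : Set ((Fin n → ℝ) × (Fin p → ℝ)))
    (hKdef : K = {w | w.2 ∈ Y ∧ ∀ j, 0 ≤ h j w}) (hKc : IsCompact K)
    (Ky : (Fin p → ℝ) → Set (Fin n → ℝ))
    (hKy : ∀ y, Ky y = {x | ∀ j, 0 ≤ h j (x, y)})
    (hne : ∀ y ∈ Y, (Ky y).Nonempty)
    (J : (Fin p → ℝ) → ℝ)
    (hJ : ∀ y, J y = sInf ((fun x => f (x, y)) '' Ky y))
    (φ : Measure (Fin p → ℝ)) [IsProbabilityMeasure φ] (hφY : φ Yᶜ = 0)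
    (ps : ℕ → MvPolynomial (Fin p) ℝ)
    (hfeas : ∀ i, ∀ w ∈ K, MvPolynomial.eval w.2 (ps i) ≤ f w)
    (hmax : Tendsto (fun i => ∫ y in Y, MvPolynomial.eval y (ps i) ∂φ) atTop
      (𝓝 (sSup {r | ∃ q : MvPolynomial (Fin p) ℝ,
        (∀ w ∈ K, MvPolynomial.eval w.2 q ≤ f w) ∧
        r = ∫ y in Y, MvPolynomial.eval y q ∂φ})))
    (ptilde : ℕ → (Fin p → ℝ) → ℝ)
    (hpt0 : ptilde 0 = fun y => MvPolynomial.eval y (ps 0))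
    (hptS : ∀ i, ptilde (i + 1)
      = fun y => max (ptilde i y) (MvPolynomial.eval y (ps (i + 1)))) :
    ∀ ε : ENNReal, 0 < ε → ∃ A : Set (Fin p → ℝ),
      A ⊆ Y ∧ MeasurableSet A ∧ φ A < ε ∧
      TendstoUniformlyOn ptilde J atTop (Y \ A) := by
  obtain rfl : K = graphOver Ky Y := by simp only [hKdef, graphOver, hKy, mem_ofPred_eq]
  obtain rfl : J = valueFunction f Ky := funext hJ
  obtain rfl := eq_partialSups (u := fun i y => MvPolynomial.eval y (ps i)) hpt0 hptS
  have hf_lsc := hf.lowerSemicontinuous.lowerSemicontinuousOn (graphOver Ky Y)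
  have hJint : IntegrableOn (valueFunction f Ky) Y φ :=
    integrableOn_valueFunction hKc hf_lsc hne (hKc.bddAbove_image hf.continuousOn)
  exact fun ε hε => stmt8_general hKc hf_lsc hne hJint
    (denseRange_mvPolynomialToContinuousMap (Fin p)) hfeas hmax hε
end
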